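/- arXiv:2309.12413 — 3 statements merged into one kernel-verified Lean document; each statement's English description precedes it below -/
import Mathlib

section
/- There exists a constant d > 0, depending only on the number field F, such that for every nonzero ideal q of the ring of integers 𝒪_F with absolute norm N(q) ≥ 2, there exists a nonzero prime ideal u of 𝒪_F which does not divide q and satisfies N(u) ≤ d · log N(q). -/
open NumberField
set_option linter.unusedSectionVars false

namespace SCP
open scoped Classical

variable {F : Type*} [Field F] [NumberField F] {ι : Type*} [Fintype ι]

noncomputable def box (b : Module.Basis ι ℤ (𝓞 F)) (v : ι → ℤ) (X : ℕ) : Finset (𝓞 F) :=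
  (Fintype.piFinset fun i => Finset.Ico (v i) (v i + X)).map b.equivFun.symm.toEquiv.toEmbedding

lemma mem_box (b : Module.Basis ι ℤ (𝓞 F)) (v : ι → ℤ) (X : ℕ) (a : 𝓞 F) :
    a ∈ box b v X ↔ ∀ i, v i ≤ b.repr a i ∧ b.repr a i < v i + X := by
  unfold box
  rw [Finset.mem_map_equiv]
  simp [Fintype.mem_piFinset]

lemma card_box (b : Module.Basis ι ℤ (𝓞 F)) (v : ι → ℤ) (X : ℕ) :
    (box b v X).card = X ^ Fintype.card ι := by
  unfold box
  simp

noncomputable def cnt (b : Module.Basis ι ℤ (𝓞 F)) (I : Ideal (𝓞 F)) (v : ι → ℤ) (X : ℕ) : ℕ :=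
  ((box b v X).filter (fun a => a ∈ I)).card

/-- pigeonhole: small element -/
lemma exists_small (b : Module.Basis ι ℤ (𝓞 F)) (I : Ideal (𝓞 F)) (hI : I ≠ 0) (T : ℕ)
    (hT : Ideal.absNorm I < (T + 1) ^ Fintype.card ι) :
    ∃ g ∈ I, g ≠ 0 ∧ ∀ i, |b.repr g i| ≤ T := by
  have : Finite (𝓞 F ⧸ I) := Ideal.finiteQuotientOfFreeOfNeBot I hI
  have := Fintype.ofFinite (𝓞 F ⧸ I)
  have hc : (Finset.univ : Finset (𝓞 F ⧸ I)).card < (box b 0 (T+1)).card := by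
    rw [card_box, Finset.card_univ, ← Nat.card_eq_fintype_card]
    exact hT
  obtain ⟨x, hx, y, hy, hne, hxy⟩ := Finset.exists_ne_map_eq_of_card_lt_of_maps_to
    (f := fun a => Ideal.Quotient.mk I a) hc (fun a _ => Finset.mem_univ _)
  refine ⟨x - y, Ideal.Quotient.eq.mp hxy, sub_ne_zero.mpr hne, fun i => ?_⟩
  rw [mem_box] at hx hy
  have h1 := hx i
  have h2 := hy i
  simp only [map_sub, Finsupp.coe_sub, Pi.sub_apply]
  simp at h1 h2
  rw [abs_le]
  constructor <;> omega

/-- structure constant -/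
noncomputable def sc (b : Module.Basis ι ℤ (𝓞 F)) : ℕ :=
  ∑ i, ∑ j, ∑ k, (b.repr (b i * b j) k).natAbs

lemma exists_rep (b : Module.Basis ι ℤ (𝓞 F)) (I : Ideal (𝓞 F)) (T : ℕ) (g : 𝓞 F)
    (hg : g ∈ I) (hg0 : g ≠ 0) (hgT : ∀ i, |b.repr g i| ≤ T) (t : 𝓞 F) :
    ∃ s, t - s ∈ I ∧ ∀ i, |b.repr s i| ≤ sc b * T := by
  have hN : (Ideal.absNorm (Ideal.span {g}) : 𝓞 F) ∈ Ideal.span {g} := Ideal.absNorm_mem _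
  obtain ⟨g', hg'⟩ := Ideal.mem_span_singleton.mp hN
  set N : ℕ := Ideal.absNorm (Ideal.span {g}) with hNdef
  have hN0 : N ≠ 0 := by
    rw [hNdef, Ne, Ideal.absNorm_eq_zero_iff]
    simpa using hg0
  have hNpos : (0 : ℤ) < N := by positivity
  set y := b.repr (t * g') with hy
  set z : 𝓞 F := ∑ i, (y i / N) • b i with hz
  set ρ : 𝓞 F := ∑ i, (y i % N) • b i with hρ
  have hsum : t * g' = N * z + ρ := by
    conv_lhs => rw [← b.sum_repr (t * g')]
    rw [hz, hρ, Finset.mul_sum, ← Finset.sum_add_distrib]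
    refine Finset.sum_congr rfl fun i _ => ?_
    rw [← hy]
    conv_lhs => rw [← Int.mul_ediv_add_emod (y i) N]
    simp only [zsmul_eq_mul]
    push_cast
    ring
  have hkey : (N : ℤ) • (t - g * z) = g * ρ := by
    have : g * (t * g') = g * (N * z + ρ) := by rw [hsum]
    simp only [zsmul_eq_mul]
    push_cast
    linear_combination this + t * hg'
  refine ⟨t - g * z, ?_, fun k => ?_⟩
  · simpa using I.mul_mem_right z hg
  · have h1 : (N : ℤ) * b.repr (t - g * z) k = b.repr (g * ρ) k := by
      rw [← hkey, map_smul]; rfl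
    have h2 : b.repr (g * ρ) k = ∑ i, ∑ j, b.repr g i * (y j % N) * b.repr (b i * b j) k := by
      have : g * ρ = ∑ i, ∑ j, (b.repr g i * (y j % N)) • (b i * b j) := by
        conv_lhs => rw [← b.sum_repr g, hρ, Finset.sum_mul_sum]
        refine Finset.sum_congr rfl fun i _ => Finset.sum_congr rfl fun j _ => ?_
        simp only [zsmul_eq_mul]
        push_cast
        ring
      rw [this]
      simp only [map_sum, map_smul, Finsupp.finsetSum_apply, Finsupp.smul_apply, smul_eq_mul]
    have h3 : |b.repr (g * ρ) k| ≤ N * (sc b * T) := by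
      rw [h2]
      calc _ ≤ ∑ i, ∑ j, |b.repr g i * (y j % N) * b.repr (b i * b j) k| :=
            (Finset.abs_sum_le_sum_abs _ _).trans
              (Finset.sum_le_sum fun i _ => Finset.abs_sum_le_sum_abs _ _)
        _ ≤ ∑ i, ∑ j, (T * N) * |b.repr (b i * b j) k| := by
            refine Finset.sum_le_sum fun i _ => Finset.sum_le_sum fun j _ => ?_
            rw [abs_mul, abs_mul]
            have := hgT i
            have h5 : |y j % N| ≤ N := by
              rw [abs_of_nonneg (Int.emod_nonneg _ hNpos.ne')]
              exact (Int.emod_lt_of_pos _ hNpos).le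
            gcongr
        _ ≤ ∑ i, ∑ j, (T * N) * ∑ k, |b.repr (b i * b j) k| := by
            refine Finset.sum_le_sum fun i _ => Finset.sum_le_sum fun j _ => ?_
            gcongr
            exact Finset.single_le_sum (f := fun k => |b.repr (b i * b j) k|)
              (fun _ _ => abs_nonneg _) (Finset.mem_univ k)
        _ = N * (sc b * T) := by
            simp only [sc, Nat.cast_sum, Int.natCast_natAbs, ← Finset.mul_sum]
            ring
    rw [← h1, abs_mul, abs_of_pos hNpos] at h3
    exact le_of_mul_le_mul_left h3 hNpos

lemma cnt_bounds (b : Module.Basis ι ℤ (𝓞 F)) (I : Ideal (𝓞 F)) (hI : I ≠ 0) (T : ℕ)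
    (hT : Ideal.absNorm I < (T + 1) ^ Fintype.card ι) (v : ι → ℤ) (X : ℕ) :
    Ideal.absNorm I * cnt b I v X ≤ (X + 2 * (sc b * T)) ^ Fintype.card ι ∧
    (X - 2 * (sc b * T)) ^ Fintype.card ι ≤ Ideal.absNorm I * cnt b I v X := by
  have : Finite (𝓞 F ⧸ I) := Ideal.finiteQuotientOfFreeOfNeBot I hI
  have := Fintype.ofFinite (𝓞 F ⧸ I)
  obtain ⟨g, hg, hg0, hgT⟩ := exists_small b I hI T hT
  have hrep : ∀ c : 𝓞 F ⧸ I, ∃ s, Ideal.Quotient.mk I s = c ∧ ∀ i, |b.repr s i| ≤ sc b * T := by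
    intro c
    obtain ⟨t, rfl⟩ := Ideal.Quotient.mk_surjective c
    obtain ⟨s, hs, hs'⟩ := exists_rep b I T g hg hg0 hgT t
    exact ⟨s, (Ideal.Quotient.eq.mpr hs).symm, hs'⟩
  choose r hr hrb using hrep
  have hM : Ideal.absNorm I = (Finset.univ : Finset (𝓞 F ⧸ I)).card := by
    rw [Finset.card_univ, ← Nat.card_eq_fintype_card]; rfl
  set R : ℕ := sc b * T with hR
  have hrb' : ∀ c i, -(R : ℤ) ≤ b.repr (r c) i ∧ b.repr (r c) i ≤ R := by
    intro c i
    have := hrb c i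
    rw [abs_le] at this
    rw [hR]; push_cast; exact this
  constructor
  · rw [hM, cnt, ← Finset.card_product, ← card_box b (fun i => v i - R) (X + 2 * R)]
    refine Finset.card_le_card_of_injOn (fun p => p.2 + r p.1) ?_ ?_
    · rintro ⟨c, a⟩ h
      simp only [Finset.coe_product, Set.mem_prod, Finset.mem_coe, Finset.mem_filter, mem_box] at h
      simp only [Finset.mem_coe, mem_box]
      intro i
      have h1 := h.2.1 i
      have h2 := hrb' c i
      simp only [map_add, Finsupp.coe_add, Pi.add_apply]
      push_cast
      constructor <;> omega
    · rintro ⟨c, a⟩ h ⟨c', a'⟩ h' he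
      simp only [Finset.coe_product, Set.mem_prod, Finset.mem_coe, Finset.mem_filter] at h h'
      simp only at he
      have hcc : c = c' := by
        have := congrArg (Ideal.Quotient.mk I) he
        rwa [map_add, map_add, hr, hr, Ideal.Quotient.eq_zero_iff_mem.mpr h.2.2,
          Ideal.Quotient.eq_zero_iff_mem.mpr h'.2.2, zero_add, zero_add] at this
      subst hcc
      simpa using he
  · rw [hM, cnt, ← Finset.card_product, ← card_box b (fun i => v i + R) (X - 2 * R)]
    refine Finset.card_le_card_of_injOn
      (fun a => (Ideal.Quotient.mk I a, a - r (Ideal.Quotient.mk I a))) ?_ ?_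
    · intro a h
      simp only [Finset.mem_coe, mem_box] at h
      simp only [Finset.coe_product, Set.mem_prod, Finset.mem_coe, Finset.mem_filter, mem_box,
        Finset.mem_univ, true_and]
      refine ⟨fun i => ?_, ?_⟩
      · have h1 := h i
        have h2 := hrb' (Ideal.Quotient.mk I a) i
        simp only [map_sub, Finsupp.coe_sub, Pi.sub_apply]
        constructor <;> omega
      · rw [← Ideal.Quotient.eq, hr]
    · intro a _ a' _ he
      simp only [Prod.mk.injEq] at he
      rw [he.1] at he
      simpa using he.2

end SCP

namespace SCP
open scoped Classical

variable {F : Type*} [Field F] [NumberField F]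

lemma two_le_norm (P : Ideal (𝓞 F)) (hP : P.IsPrime) (h0 : P ≠ 0) : 2 ≤ Ideal.absNorm P := by
  have h1 : Ideal.absNorm P ≠ 0 := by
    rw [Ne, Ideal.absNorm_eq_zero_iff]; exact h0
  have h2 : Ideal.absNorm P ≠ 1 := by
    rw [Ne, Ideal.absNorm_eq_one_iff]; exact hP.ne_top
  omega

lemma norm_prime (P : Ideal (𝓞 F)) (hP : P.IsPrime) (h0 : P ≠ 0) :
    ∃ p f : ℕ, p.Prime ∧ f ≠ 0 ∧ f ≤ Module.finrank ℤ (𝓞 F) ∧ Ideal.absNorm P = p ^ f ∧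
      P ∣ Ideal.span {(p : 𝓞 F)} := by
  have hm : (Ideal.absNorm P : 𝓞 F) ∈ P := Ideal.absNorm_mem P
  have h2 := two_le_norm P hP h0
  have key : ∀ N : ℕ, N ≠ 0 → (N : 𝓞 F) ∈ P → ∃ p : ℕ, p.Prime ∧ (p : 𝓞 F) ∈ P := by
    intro N
    induction N using Nat.recOnMul with
    | zero => simp
    | one => intro _ h; exact absurd ((Ideal.eq_top_iff_one P).mpr (by simpa using h)) hP.ne_top
    | prime p hp => intro _ h; exact ⟨p, hp, h⟩
    | mul a c iha ihc =>
      intro h0 h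
      push_cast at h
      rcases hP.mem_or_mem h with h | h
      · exact iha (by rintro rfl; simp at h0) h
      · exact ihc (by rintro rfl; simp at h0) h
  obtain ⟨p, hp, hpP⟩ := key _ (by omega) hm
  have hd : P ∣ Ideal.span {(p : 𝓞 F)} := by
    rw [Ideal.dvd_iff_le, Ideal.span_singleton_le_iff_mem]; exact hpP
  have hd2 : Ideal.absNorm P ∣ p ^ Module.finrank ℤ (𝓞 F) := by
    rw [← Ideal.absNorm_span_natCast]
    exact map_dvd _ hd
  obtain ⟨f, hf, hf'⟩ := (Nat.dvd_prime_pow hp).mp hd2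
  refine ⟨p, f, hp, ?_, hf, hf', hd⟩
  rintro rfl
  simp at hf'
  exact hP.ne_top hf'

noncomputable def primesF (F : Type*) [Field F] [NumberField F] (Z : ℕ) : Finset (Ideal (𝓞 F)) :=
  (Ideal.finite_setOfPred_absNorm_le (S := 𝓞 F) Z).toFinset.filter (fun P => P.IsPrime ∧ P ≠ 0)

lemma mem_primesF {Z : ℕ} {P : Ideal (𝓞 F)} :
    P ∈ primesF F Z ↔ Ideal.absNorm P ≤ Z ∧ P.IsPrime ∧ P ≠ 0 := by
  simp [primesF]

noncomputable def pairs (F : Type*) [Field F] [NumberField F] (Z : ℕ) :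
    Finset (Ideal (𝓞 F) × ℕ) :=
  (primesF F Z ×ˢ Finset.Icc 1 Z).filter (fun x => Ideal.absNorm x.1 ^ x.2 ≤ Z)

lemma mem_pairs {Z : ℕ} {x : Ideal (𝓞 F) × ℕ} :
    x ∈ pairs F Z ↔ x.1.IsPrime ∧ x.1 ≠ 0 ∧ 1 ≤ x.2 ∧ Ideal.absNorm x.1 ^ x.2 ≤ Z := by
  simp only [pairs, Finset.mem_filter, Finset.mem_product, mem_primesF, Finset.mem_Icc]
  constructor
  · tauto
  · rintro ⟨h1, h2, h3, h4⟩
    have h5 := two_le_norm _ h1 h2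
    refine ⟨⟨⟨?_, h1, h2⟩, h3, ?_⟩, h4⟩
    · exact (Nat.le_self_pow (by omega) _).trans h4
    · exact ((Nat.lt_pow_self (by omega)).le).trans h4

open UniqueFactorizationMonoid in
lemma log_norm {Z : ℕ} (I : Ideal (𝓞 F)) (hI : I ≠ 0) (hZ : Ideal.absNorm I ≤ Z) :
    Real.log (Ideal.absNorm I) =
      ∑ x ∈ pairs F Z, if x.1 ^ x.2 ∣ I then Real.log (Ideal.absNorm x.1) else 0 := by
  have hI0 : 0 < Ideal.absNorm I := Nat.pos_of_ne_zero (by rwa [Ne, Ideal.absNorm_eq_zero_iff])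
  have hle : ∀ J : Ideal (𝓞 F), J ∣ I → Ideal.absNorm J ≤ Z := fun J hJ =>
    (Nat.le_of_dvd hI0 (map_dvd _ hJ)).trans hZ
  have h1 : Real.log (Ideal.absNorm I) = ∑ P ∈ primesF F Z,
      (normalizedFactors I).count P * Real.log (Ideal.absNorm P) := by
    have h2 : Ideal.absNorm I = ∏ P ∈ (normalizedFactors I).toFinset,
        Ideal.absNorm P ^ (normalizedFactors I).count P := by
      conv_lhs => rw [← Ideal.prod_normalizedFactors_eq_self hI, Finset.prod_multiset_count]
      simp
    have h3 : (normalizedFactors I).toFinset ⊆ primesF F Z := by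
      intro P hP
      rw [Multiset.mem_toFinset] at hP
      have hp := prime_of_normalized_factor P hP
      exact mem_primesF.mpr ⟨hle P (dvd_of_mem_normalizedFactors hP),
        Ideal.isPrime_of_prime hp, hp.ne_zero⟩
    rw [h2]
    push_cast
    rw [Real.log_prod]
    · simp only [Real.log_pow]
      refine Finset.sum_subset h3 fun P _ hP => ?_
      rw [Multiset.count_eq_zero.mpr (fun h => hP (Multiset.mem_toFinset.mpr h))]
      simp
    · intro P hP
      have := mem_primesF.mp (h3 hP)
      have := two_le_norm P this.2.1 this.2.2
      positivity
  rw [h1, ← Finset.sum_filter]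
  have h4 : (pairs F Z).filter (fun x => x.1 ^ x.2 ∣ I) =
      ((primesF F Z).sigma (fun P => Finset.Icc 1 ((normalizedFactors I).count P))).map
        (Equiv.sigmaEquivProd (Ideal (𝓞 F)) ℕ).toEmbedding := by
    ext ⟨P, k⟩
    rw [Finset.mem_map_equiv]
    simp only [Finset.mem_filter, mem_pairs, Equiv.sigmaEquivProd_symm_apply, Finset.mem_sigma,
      mem_primesF, Finset.mem_Icc]
    have hiff : P.IsPrime → P ≠ 0 → (P ^ k ∣ I ↔ k ≤ (normalizedFactors I).count P) := by
      intro hP hP0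
      have := emultiplicity_eq_count_normalizedFactors
        (Ideal.prime_of_isPrime hP0 hP).irreducible hI
      rw [normalize_eq] at this
      rw [pow_dvd_iff_le_emultiplicity, this]
      simp
    constructor
    · rintro ⟨⟨a, b, c, d⟩, e⟩
      refine ⟨⟨?_, a, b⟩, c, (hiff a b).mp e⟩
      exact hle _ ((dvd_pow_self P (by omega)).trans e)
    · rintro ⟨⟨a, b, c⟩, d, e⟩
      have e' := (hiff b c).mpr e
      refine ⟨⟨b, c, d, ?_⟩, e'⟩
      rw [← map_pow]
      exact hle _ e'
  rw [h4, Finset.sum_map, Finset.sum_sigma]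
  simp

open ArithmeticFunction in
lemma fiber {Z : ℕ} (f : ℕ → ℝ) (hf : ∀ m, 0 ≤ f m) :
    ∑ x ∈ pairs F Z, Real.log (Ideal.absNorm x.1) * f (Ideal.absNorm x.1 ^ x.2) ≤
      (Module.finrank ℤ (𝓞 F) : ℝ) ^ 2 * ∑ m ∈ Finset.Ioc 0 Z, vonMangoldt m * f m := by
  set n := Module.finrank ℤ (𝓞 F) with hn
  have hmaps : ∀ x ∈ pairs F Z, Ideal.absNorm x.1 ^ x.2 ∈ Finset.Ioc 0 Z := by
    intro x hx
    rw [mem_pairs] at hx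
    have := two_le_norm _ hx.1 hx.2.1
    rw [Finset.mem_Ioc]
    exact ⟨by positivity, hx.2.2.2⟩
  rw [← Finset.sum_fiberwise_of_maps_to hmaps, Finset.mul_sum]
  refine Finset.sum_le_sum fun m hm => ?_
  set S := (pairs F Z).filter (fun x => Ideal.absNorm x.1 ^ x.2 = m) with hS
  have hterm : ∀ x ∈ S, x.1 ∣ Ideal.span {(m.minFac : 𝓞 F)} ∧ m.minFac.Prime ∧
      m.minFac ≤ Ideal.absNorm x.1 ∧
      Real.log (Ideal.absNorm x.1) ≤ n * vonMangoldt m := by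
    intro x hx
    rw [hS, Finset.mem_filter, mem_pairs] at hx
    obtain ⟨⟨h1, h2, h3, h4⟩, h5⟩ := hx
    obtain ⟨p, e, hp, he0, hen, hpe, hd⟩ := norm_prime x.1 h1 h2
    have hmin : m.minFac = p := by
      rw [← h5, hpe, ← pow_mul, hp.pow_minFac]
      exact Nat.mul_ne_zero he0 (by omega)
    have hL : vonMangoldt m = Real.log p := by
      rw [← h5, hpe, vonMangoldt_apply_pow (by omega), vonMangoldt_apply_pow he0,
        vonMangoldt_apply_prime hp]
    rw [hmin]
    refine ⟨hd, hp, ?_, ?_⟩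
    · rw [hpe]; exact Nat.le_self_pow he0 p
    · rw [hL, hpe]; push_cast
      rw [Real.log_pow]
      have : 0 ≤ Real.log p := Real.log_natCast_nonneg p
      gcongr
  have hcard : S.card ≤ n := by
    by_cases hne : S.Nonempty
    · obtain ⟨x0, hx0⟩ := hne
      have hp := (hterm x0 hx0).2.1
      set p := m.minFac
      have hinj : Set.InjOn (Prod.fst : Ideal (𝓞 F) × ℕ → Ideal (𝓞 F)) S := by
        rintro ⟨P, k⟩ h ⟨Q, l⟩ h' he
        simp only at he
        subst he
        simp only [hS, Finset.coe_filter, Set.mem_ofPred_eq, mem_pairs] at h h'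
        have h2 := two_le_norm _ h.1.1 h.1.2.1
        have : k = l := Nat.pow_right_injective h2 (by simpa using h.2.trans h'.2.symm)
        rw [this]
      rw [← Finset.card_image_of_injOn hinj]
      have hdvd : ∏ P ∈ S.image Prod.fst, P ∣ Ideal.span {(p : 𝓞 F)} := by
        refine Finset.prod_primes_dvd _ ?_ ?_
        · intro P hP
          obtain ⟨x, hx, rfl⟩ := Finset.mem_image.mp hP
          have := (mem_pairs.mp (Finset.mem_filter.mp hx).1)
          exact Ideal.prime_of_isPrime this.2.1 this.1
        · intro P hP
          obtain ⟨x, hx, rfl⟩ := Finset.mem_image.mp hP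
          exact (hterm x hx).1
      have h6 := map_dvd Ideal.absNorm hdvd
      rw [map_prod, Ideal.absNorm_span_natCast] at h6
      have h7 := Nat.le_of_dvd (pow_pos hp.pos _) h6
      have h8 : p ^ (S.image Prod.fst).card ≤ ∏ P ∈ S.image Prod.fst, Ideal.absNorm P := by
        refine Finset.pow_card_le_prod _ _ _ ?_
        intro P hP
        obtain ⟨x, hx, rfl⟩ := Finset.mem_image.mp hP
        exact (hterm x hx).2.2.1
      exact (Nat.pow_le_pow_iff_right hp.one_lt).mp (h8.trans h7)
    · rw [Finset.not_nonempty_iff_eq_empty] at hne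
      simp [hne]
  have hL0 : 0 ≤ vonMangoldt m := vonMangoldt_nonneg
  calc _ ≤ ∑ x ∈ S, n * vonMangoldt m * f m := by
        refine Finset.sum_le_sum fun x hx => ?_
        rw [(Finset.mem_filter.mp hx).2]
        exact mul_le_mul_of_nonneg_right (hterm x hx).2.2.2 (hf m)
    _ = S.card * (n * vonMangoldt m * f m) := by rw [Finset.sum_const, nsmul_eq_mul]
    _ ≤ n * (n * vonMangoldt m * f m) := by
        have := hf m
        gcongr
    _ = _ := by ring

end SCP

namespace SCP
open scoped Classical

variable {F : Type*} [Field F] [NumberField F]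

lemma absNorm_prod (a : 𝓞 F) : ((Ideal.absNorm (Ideal.span {a}) : ℕ) : ℝ) =
    ∏ φ : F →ₐ[ℚ] ℂ, ‖φ (a : F)‖ := by
  rw [Ideal.absNorm_span_singleton, ← norm_prod, ← Algebra.norm_eq_prod_embeddings,
    ← Algebra.coe_norm_int]
  simp [Nat.cast_natAbs]

lemma norm_between (a : 𝓞 F) (A B : ℝ) (hA : 0 ≤ A) (h : ∀ φ : F →ₐ[ℚ] ℂ, A ≤ ‖φ (a : F)‖ ∧ ‖φ (a : F)‖ ≤ B) :
    A ^ Module.finrank ℤ (𝓞 F) ≤ (Ideal.absNorm (Ideal.span {a}) : ℕ) ∧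
    ((Ideal.absNorm (Ideal.span {a}) : ℕ) : ℝ) ≤ B ^ Module.finrank ℤ (𝓞 F) := by
  have hc : Module.finrank ℤ (𝓞 F) = (Finset.univ : Finset (F →ₐ[ℚ] ℂ)).card := by
    rw [Finset.card_univ, AlgHom.card, RingOfIntegers.rank]
  rw [absNorm_prod, hc, ← Finset.prod_const, ← Finset.prod_const]
  exact ⟨Finset.prod_le_prod (fun _ _ => hA) fun φ _ => (h φ).1,
    Finset.prod_le_prod (fun _ _ => norm_nonneg _) fun φ _ => (h φ).2⟩

lemma emb_bound {ι : Type*} [Fintype ι] (b : Module.Basis ι ℤ (𝓞 F)) :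
    ∃ C : ℕ, ∀ (X : ℝ) (a : 𝓞 F), 0 ≤ X → (∀ i, |(b.repr a i : ℝ)| ≤ X) → ∀ φ : F →ₐ[ℚ] ℂ,
      ‖φ (a : F)‖ ≤ C * X := by
  obtain ⟨C, hC⟩ := exists_nat_ge (∑ φ : F →ₐ[ℚ] ℂ, ∑ i, ‖φ (b i : F)‖)
  refine ⟨C, fun X a hX h φ => ?_⟩
  have h1 : φ (a : F) = ∑ i, (b.repr a i : ℂ) * φ (b i : F) := by
    conv_lhs => rw [← b.sum_repr a]
    simp [map_sum, zsmul_eq_mul]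
  rw [h1]
  calc _ ≤ ∑ i, ‖(b.repr a i : ℂ) * φ (b i : F)‖ := norm_sum_le _ _
    _ ≤ ∑ i, X * ‖φ (b i : F)‖ := by
        refine Finset.sum_le_sum fun i _ => ?_
        rw [norm_mul]
        have : ‖((b.repr a i : ℤ) : ℂ)‖ ≤ X := by
          rw [Complex.norm_intCast]; exact h i
        gcongr
    _ = X * ∑ i, ‖φ (b i : F)‖ := by rw [Finset.mul_sum]
    _ ≤ X * C := by
        gcongr
        refine le_trans ?_ hC
        exact Finset.single_le_sum (f := fun φ : F →ₐ[ℚ] ℂ => ∑ i, ‖φ (b i : F)‖)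
          (fun φ _ => Finset.sum_nonneg fun _ _ => norm_nonneg _) (Finset.mem_univ φ)
    _ = C * X := mul_comm _ _

open ArithmeticFunction in
lemma partial_sum (t : ℝ) (ht : 0 < t) (ht1 : t ≤ 1) : ∃ D : ℝ, 0 < D ∧ ∀ y : ℕ,
    ∑ m ∈ Finset.Ioc 0 y, vonMangoldt m * (m : ℝ) ^ (t - 1) ≤ D * (y : ℝ) ^ t := by
  set A : ℝ := Real.log 4 + 4 with hA
  have hA0 : 0 < A := by have := Real.log_nonneg (show (1:ℝ) ≤ 4 by norm_num); positivity
  have hlt : (2 : ℝ) ^ (-t) < 1 := Real.rpow_lt_one_of_one_lt_of_neg (by norm_num) (by linarith)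
  have hpos : 0 < 1 - (2 : ℝ) ^ (-t) := by linarith
  refine ⟨2 * A / (1 - (2 : ℝ) ^ (-t)), by positivity, fun y => ?_⟩
  set D := 2 * A / (1 - (2 : ℝ) ^ (-t)) with hD
  have hD0 : 0 < D := by positivity
  have hDeq : D * 2 ^ (-t) + 2 * A = D := by
    have : D * (1 - (2 : ℝ) ^ (-t)) = 2 * A := by rw [hD]; field_simp
    linarith
  induction y using Nat.strong_induction_on with
  | _ y ih =>
    rcases Nat.eq_zero_or_pos y with rfl | hy
    · simp; positivity
    have hyR : (0 : ℝ) < y := by exact_mod_cast hy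
    have hhalf : (((y / 2 : ℕ) : ℝ)) ≤ y / 2 := Nat.cast_div_le
    rw [← Finset.sum_Ioc_consecutive _ (Nat.zero_le (y / 2)) (Nat.div_le_self y 2)]
    have h1 := ih (y / 2) (by omega)
    have h2 : D * ((y / 2 : ℕ) : ℝ) ^ t ≤ D * 2 ^ (-t) * (y : ℝ) ^ t := by
      have : ((y / 2 : ℕ) : ℝ) ^ t ≤ 2 ^ (-t) * (y : ℝ) ^ t := by
        calc _ ≤ ((y : ℝ) / 2) ^ t := by gcongr
          _ = _ := by
            rw [Real.div_rpow hyR.le (by norm_num), Real.rpow_neg (by norm_num)]; ring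
      rw [mul_assoc]; gcongr
    have h3 : ∑ m ∈ Finset.Ioc (y / 2) y, vonMangoldt m * (m : ℝ) ^ (t - 1) ≤
        2 * A * (y : ℝ) ^ t := by
      calc _ ≤ ∑ m ∈ Finset.Ioc (y / 2) y, vonMangoldt m * ((y : ℝ) / 2) ^ (t - 1) := by
            refine Finset.sum_le_sum fun m hm => ?_
            rw [Finset.mem_Ioc] at hm
            have hm' : (y : ℝ) / 2 ≤ m := by
              have : y ≤ 2 * m := by omega
              have : (y : ℝ) ≤ 2 * m := by exact_mod_cast this
              linarith
            have := @vonMangoldt_nonneg m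
            exact mul_le_mul_of_nonneg_left
              (Real.rpow_le_rpow_of_nonpos (by positivity) hm' (by linarith)) this
        _ ≤ ∑ m ∈ Finset.Ioc 0 y, vonMangoldt m * ((y : ℝ) / 2) ^ (t - 1) := by
            refine Finset.sum_le_sum_of_subset_of_nonneg
              (Finset.Ioc_subset_Ioc_left (Nat.zero_le _)) fun m _ _ => ?_
            have := @vonMangoldt_nonneg m
            positivity
        _ = Chebyshev.psi y * ((y : ℝ) / 2) ^ (t - 1) := by
            rw [← Finset.sum_mul, Chebyshev.psi, Nat.floor_natCast]
        _ ≤ (A * y) * ((y : ℝ) / 2) ^ (t - 1) := by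
            gcongr
            exact Chebyshev.psi_le_const_mul_self hyR.le
        _ = A * y ^ t * (2 : ℝ) ^ (1 - t) := by
            rw [Real.div_rpow hyR.le (by norm_num), Real.rpow_sub_one hyR.ne',
              show (1 - t) = -(t - 1) by ring, Real.rpow_neg (by norm_num)]
            field_simp
        _ ≤ A * y ^ t * 2 := by
            gcongr
            calc (2 : ℝ) ^ (1 - t) ≤ 2 ^ (1 : ℝ) :=
                  Real.rpow_le_rpow_of_exponent_le (by norm_num) (by linarith)
              _ = 2 := by norm_num
        _ = _ := by ring
    calc _ ≤ D * 2 ^ (-t) * (y : ℝ) ^ t + 2 * A * (y : ℝ) ^ t := add_le_add (h1.trans h2) h3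
      _ = (D * 2 ^ (-t) + 2 * A) * (y : ℝ) ^ t := by ring
      _ = _ := by rw [hDeq]

end SCP

namespace SCP
open scoped Classical

variable {F : Type*} [Field F] [NumberField F] {ι : Type*} [Fintype ι]

lemma exists_root (n : ℕ) (hn : n ≠ 0) (M : ℕ) : ∃ T : ℕ, T ^ n ≤ M ∧ M < (T + 1) ^ n ∧
    (T : ℝ) ≤ (M : ℝ) ^ (1 / (n : ℝ)) := by
  have hroot : ((M : ℝ) ^ (1 / (n : ℝ))) ^ n = M := by
    rw [one_div, Real.rpow_inv_natCast_pow (by positivity) hn]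
  have h0 : (0 : ℝ) ≤ (M : ℝ) ^ (1 / (n : ℝ)) := by positivity
  refine ⟨⌊(M : ℝ) ^ (1 / (n : ℝ))⌋₊, ?_, ?_, Nat.floor_le h0⟩
  · have : ((⌊(M : ℝ) ^ (1 / (n : ℝ))⌋₊ : ℕ) : ℝ) ^ n ≤ M := by
      conv_rhs => rw [← hroot]
      have := Nat.floor_le h0
      gcongr
    exact_mod_cast this
  · have : (M : ℝ) < ((⌊(M : ℝ) ^ (1 / (n : ℝ))⌋₊ : ℕ) + 1 : ℝ) ^ n := by
      conv_lhs => rw [← hroot]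
      have := Nat.lt_floor_add_one ((M : ℝ) ^ (1 / (n : ℝ)))
      gcongr
    exact_mod_cast this

/-- embedding sizes on the shifted box -/
lemma box_emb (b : Module.Basis ι ℤ (𝓞 F)) (C : ℕ)
    (hC : ∀ (X : ℝ) (a : 𝓞 F), 0 ≤ X → (∀ i, |(b.repr a i : ℝ)| ≤ X) → ∀ φ : F →ₐ[ℚ] ℂ,
      ‖φ (a : F)‖ ≤ C * X) (K X : ℕ) (a : 𝓞 F)
    (ha : a ∈ box b (fun i => (K * X : ℕ) * b.repr 1 i) X) (φ : F →ₐ[ℚ] ℂ) :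
    (K : ℝ) * X - C * X ≤ ‖φ (a : F)‖ ∧ ‖φ (a : F)‖ ≤ (K : ℝ) * X + C * X := by
  rw [mem_box] at ha
  set β : 𝓞 F := a - (K * X : ℕ) with hβ
  have hrep : ∀ i, b.repr β i = b.repr a i - (K * X : ℕ) * b.repr 1 i := by
    intro i
    have : ((K * X : ℕ) : 𝓞 F) = ((K * X : ℕ) : ℤ) • (1 : 𝓞 F) := by simp
    rw [hβ, this, map_sub, map_smul]
    simp
  have h1 : ‖φ (β : F)‖ ≤ C * X := by
    refine hC X β (by positivity) (fun i => ?_) φ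
    rw [hrep i]
    have := ha i
    have h2 : |b.repr a i - (K * X : ℕ) * b.repr 1 i| ≤ (X : ℤ) := by
      rw [abs_le]; constructor <;> omega
    exact_mod_cast h2
  have h2 : φ (a : F) = (K * X : ℝ) + φ (β : F) := by
    have : (a : F) = (K * X : F) + (β : F) := by
      rw [hβ]; simp
    rw [this]
    simp
  have h3 : ‖((K * X : ℝ) : ℂ)‖ = K * X := by
    rw [Complex.norm_real, Real.norm_of_nonneg (by positivity)]
  have h2' : φ (a : F) = ((K * X : ℝ) : ℂ) + φ (β : F) := by rw [h2]
  rw [h2']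
  constructor
  · have := norm_sub_le_norm_add ((K * X : ℝ) : ℂ) (φ (β : F))
    linarith
  · have := norm_add_le ((K * X : ℝ) : ℂ) (φ (β : F))
    linarith

lemma sum_log (b : Module.Basis ι ℤ (𝓞 F)) (v : ι → ℤ) (X Z : ℕ)
    (h : ∀ a ∈ box b v X, a ≠ 0 ∧ Ideal.absNorm (Ideal.span {a}) ≤ Z) :
    ∑ a ∈ box b v X, Real.log (Ideal.absNorm (Ideal.span {a})) =
      ∑ x ∈ pairs F Z, Real.log (Ideal.absNorm x.1) * cnt b (x.1 ^ x.2) v X := by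
  have h1 : ∀ a ∈ box b v X, Real.log (Ideal.absNorm (Ideal.span {a})) =
      ∑ x ∈ pairs F Z, if a ∈ x.1 ^ x.2 then Real.log (Ideal.absNorm x.1) else 0 := by
    intro a ha
    rw [log_norm (Ideal.span {a}) (by simpa using (h a ha).1) (h a ha).2]
    simp only [Ideal.dvd_span_singleton]
  rw [Finset.sum_congr rfl h1, Finset.sum_comm]
  refine Finset.sum_congr rfl fun x _ => ?_
  rw [← Finset.sum_filter, Finset.sum_const, nsmul_eq_mul, cnt, mul_comm]

lemma cnt_small (b : Module.Basis ι ℤ (𝓞 F)) (hn : Fintype.card ι ≠ 0) (I : Ideal (𝓞 F))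
    (hI : I ≠ 0) (v v' : ι → ℤ) (X W : ℕ) (hX : 2 * (sc b * W) ≤ X)
    (hW : Ideal.absNorm I ≤ W ^ Fintype.card ι) :
    (cnt b I v' X : ℝ) - cnt b I v X ≤
      (4 * sc b * Fintype.card ι * (2 * X : ℝ) ^ (Fintype.card ι - 1)) *
        (Ideal.absNorm I : ℝ) ^ (1 / (Fintype.card ι : ℝ) - 1) := by
  set n := Fintype.card ι with hnd
  set M := Ideal.absNorm I with hM
  have hM0 : 0 < M := Nat.pos_of_ne_zero (by rwa [hM, Ne, Ideal.absNorm_eq_zero_iff])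
  have hM0' : (0 : ℝ) < M := by exact_mod_cast hM0
  obtain ⟨T, hT1, hT2, hT3⟩ := exists_root n hn M
  have hTW : T ≤ W := (Nat.pow_le_pow_iff_left hn).mp (hT1.trans hW)
  have hle : 2 * (sc b * T) ≤ X := le_trans (by gcongr) hX
  have h1 := (cnt_bounds b I hI T hT2 v' X).1
  have h2 := (cnt_bounds b I hI T hT2 v X).2
  have h1' : (M : ℝ) * cnt b I v' X ≤ ((X : ℝ) + 2 * (sc b * T)) ^ n := by exact_mod_cast h1
  have h2' : ((X : ℝ) - 2 * (sc b * T)) ^ n ≤ (M : ℝ) * cnt b I v X := by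
    have : (((X - 2 * (sc b * T) : ℕ) : ℝ)) ^ n ≤ (M : ℝ) * cnt b I v X := by exact_mod_cast h2
    rw [Nat.cast_sub hle] at this
    exact_mod_cast this
  have hle' : 2 * ((sc b : ℝ) * T) ≤ X := by exact_mod_cast hle
  have hr0 : 0 ≤ (sc b : ℝ) * T := by positivity
  have h3 := abs_pow_sub_pow_le ((X : ℝ) + 2 * (sc b * T)) ((X : ℝ) - 2 * (sc b * T)) n
  have hmax : max |(X : ℝ) + 2 * (sc b * T)| |(X : ℝ) - 2 * (sc b * T)| ≤ 2 * X := by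
    rw [abs_of_nonneg (by positivity), abs_of_nonneg (by linarith)]
    apply max_le <;> linarith
  have h4 : ((X : ℝ) + 2 * (sc b * T)) ^ n - ((X : ℝ) - 2 * (sc b * T)) ^ n ≤
      (4 * (sc b * T)) * n * (2 * X) ^ (n - 1) := by
    refine (le_abs_self _).trans (h3.trans ?_)
    have : |(X : ℝ) + 2 * (sc b * T) - (X - 2 * (sc b * T))| = 4 * (sc b * T) := by
      rw [show (X : ℝ) + 2 * (sc b * T) - (X - 2 * (sc b * T)) = 4 * (sc b * T) by ring,
        abs_of_nonneg (by positivity)]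
    rw [this]
    gcongr
  have h5 : (M : ℝ) * ((cnt b I v' X : ℝ) - cnt b I v X) ≤
      (4 * (sc b * (M : ℝ) ^ (1 / (n : ℝ)))) * n * (2 * X) ^ (n - 1) := by
    calc _ ≤ (4 * (sc b * T : ℝ)) * n * (2 * X) ^ (n - 1) := by linarith
      _ ≤ _ := by gcongr
  rw [Real.rpow_sub_one hM0'.ne', ← mul_div_assoc, le_div_iff₀ hM0']
  linarith

lemma cnt_large (b : Module.Basis ι ℤ (𝓞 F)) (hn : Fintype.card ι ≠ 0) (I : Ideal (𝓞 F))
    (hI : I ≠ 0) (v : ι → ℤ) (D W C : ℕ) (hW : 0 < W)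
    (hlo : W ^ Fintype.card ι ≤ Ideal.absNorm I)
    (hhi : Ideal.absNorm I ≤ (C * (D * W)) ^ Fintype.card ι) :
    cnt b I v (D * W) ≤ (D + 2 * (sc b * (C * D))) ^ Fintype.card ι := by
  set n := Fintype.card ι with hnd
  obtain ⟨T, hT1, hT2, hT3⟩ := exists_root n hn (Ideal.absNorm I)
  have hTW : T ≤ C * (D * W) := (Nat.pow_le_pow_iff_left hn).mp (hT1.trans hhi)
  have h1 := (cnt_bounds b I hI T hT2 v (D * W)).1
  have h2 : W ^ n * cnt b I v (D * W) ≤ W ^ n * (D + 2 * (sc b * (C * D))) ^ n := by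
    calc _ ≤ Ideal.absNorm I * cnt b I v (D * W) := by gcongr
      _ ≤ (D * W + 2 * (sc b * T)) ^ n := h1
      _ ≤ (D * W + 2 * (sc b * (C * (D * W)))) ^ n := by gcongr
      _ = _ := by rw [← mul_pow]; congr 1; ring
  exact Nat.le_of_mul_le_mul_left h2 (by positivity)

lemma psi_lower (b : Module.Basis ι ℤ (𝓞 F)) (hn : Fintype.card ι ≠ 0) :
    ∃ (c : ℝ) (B : ℕ), 0 < c ∧ 0 < B ∧ ∀ W : ℕ, 0 < W →
      c * (W : ℝ) ^ Fintype.card ι ≤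
        ∑ x ∈ pairs F (B * W ^ Fintype.card ι), Real.log (Ideal.absNorm x.1) := by
  have hfr : Module.finrank ℤ (𝓞 F) = Fintype.card ι := Module.finrank_eq_card_basis b
  set n := Fintype.card ι with hnd
  obtain ⟨C, hC⟩ := emb_bound b
  have hn1 : (1 : ℝ) ≤ n := by exact_mod_cast Nat.one_le_iff_ne_zero.mpr hn
  have hn0 : (0 : ℝ) < n := by linarith
  obtain ⟨Dp, hDp, hps⟩ := partial_sum (1 / (n : ℝ)) (by positivity)
    (by rw [div_le_one hn0]; exact hn1)
  set s := sc b with hs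
  have hl2 : 0 < Real.log 2 := Real.log_pos (by norm_num)
  set G : ℝ := (n : ℝ) ^ 2 * (4 * s * n * 2 ^ (n - 1)) * Dp with hG
  have hG0 : 0 ≤ G := by positivity
  obtain ⟨D, hD⟩ := exists_nat_ge (2 * (s : ℝ) + 2 * G / Real.log 2 + 1)
  have hGl : 0 ≤ 2 * G / Real.log 2 := by positivity
  have hD1 : (1 : ℝ) ≤ D := by have : (0:ℝ) ≤ s := by positivity
                               linarith
  have hD1' : 1 ≤ D := by exact_mod_cast hD1
  have hDs : 2 * s ≤ D := by
    have : 2 * (s : ℝ) ≤ D := by linarith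
    exact_mod_cast this
  have hDG : G ≤ Real.log 2 / 2 * D := by
    have h1 : 2 * G / Real.log 2 ≤ D := by
      have : (0:ℝ) ≤ s := by positivity
      linarith
    rw [div_le_iff₀ hl2] at h1
    linarith
  set C2 : ℕ := 6 * C + 2 with hC2
  set H : ℕ := (D + 2 * (s * (C2 * D))) ^ n with hH
  have hH0 : 0 < H := by positivity
  refine ⟨Real.log 2 / (2 * H), (C2 * D) ^ n, by positivity, by positivity, fun W hW => ?_⟩
  set X : ℕ := D * W with hX
  have hX0 : 0 < X := by positivity
  have hXR : (0 : ℝ) < X := by exact_mod_cast hX0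
  have hZ : (C2 * D) ^ n * W ^ n = (C2 * X) ^ n := by rw [← mul_pow, hX, mul_assoc]
  rw [hZ]
  set Z : ℕ := (C2 * X) ^ n with hZd
  set v1 : ι → ℤ := fun i => ((C + 1) * X : ℕ) * b.repr 1 i with hv1
  set v2 : ι → ℤ := fun i => ((5 * C + 2) * X : ℕ) * b.repr 1 i with hv2
  have hb1 : ∀ a ∈ box b v1 X, (X : ℝ) ^ n ≤ Ideal.absNorm (Ideal.span {a}) ∧
      (Ideal.absNorm (Ideal.span {a}) : ℝ) ≤ ((2 * C + 1) * X) ^ n := by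
    intro a ha
    rw [← hfr]
    refine norm_between a _ _ hXR.le fun φ => ?_
    have := box_emb b C hC (C + 1) X a ha φ
    push_cast at this
    constructor
    · linarith [this.1]
    · linarith [this.2]
  have hb2 : ∀ a ∈ box b v2 X, ((4 * C + 2) * X : ℝ) ^ n ≤ Ideal.absNorm (Ideal.span {a}) ∧
      (Ideal.absNorm (Ideal.span {a}) : ℝ) ≤ ((6 * C + 2) * X) ^ n := by
    intro a ha
    rw [← hfr]
    refine norm_between a _ _ (by positivity) fun φ => ?_
    have := box_emb b C hC (5 * C + 2) X a ha φ
    push_cast at this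
    constructor
    · linarith [this.1]
    · linarith [this.2]
  have hne : ∀ a : 𝓞 F, (0 : ℝ) < Ideal.absNorm (Ideal.span {a}) → a ≠ 0 := by
    rintro a h rfl
    simp at h
  have hs1 := sum_log b v1 X Z (fun a ha => ⟨hne a (lt_of_lt_of_le (by positivity) (hb1 a ha).1), by
    have h1 := (hb1 a ha).2
    have h2 : ((2 * C + 1) * X : ℝ) ^ n ≤ ((6 * C + 2) * X) ^ n := by
      gcongr
      · norm_num
      · norm_num
    have h3 := h1.trans h2
    rw [hZd, hC2]
    exact_mod_cast h3⟩)
  have hs2 := sum_log b v2 X Z (fun a ha => ⟨hne a (lt_of_lt_of_le (by positivity) (hb2 a ha).1), by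
    have h3 := (hb2 a ha).2
    rw [hZd, hC2]
    exact_mod_cast h3⟩)
  set L1 : ℝ := Real.log (((2 * C + 1) * X : ℝ) ^ n) with hL1
  set L2 : ℝ := Real.log (((4 * C + 2) * X : ℝ) ^ n) with hL2
  have hL : Real.log 2 ≤ L2 - L1 := by
    rw [hL1, hL2, Real.log_pow, Real.log_pow,
      show ((4 * C + 2) * X : ℝ) = 2 * ((2 * C + 1) * X) by ring,
      Real.log_mul (by norm_num) (by positivity)]
    nlinarith
  have hu1 : ∑ a ∈ box b v1 X, Real.log (Ideal.absNorm (Ideal.span {a})) ≤ (X : ℝ) ^ n * L1 := by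
    have : ∑ a ∈ box b v1 X, Real.log (Ideal.absNorm (Ideal.span {a})) ≤
        ∑ a ∈ box b v1 X, L1 := by
      refine Finset.sum_le_sum fun a ha => ?_
      exact Real.log_le_log (lt_of_lt_of_le (by positivity) (hb1 a ha).1) (hb1 a ha).2
    rw [Finset.sum_const, card_box, nsmul_eq_mul] at this
    exact_mod_cast this
  have hu2 : (X : ℝ) ^ n * L2 ≤ ∑ a ∈ box b v2 X, Real.log (Ideal.absNorm (Ideal.span {a})) := by
    have : ∑ a ∈ box b v2 X, L2 ≤
        ∑ a ∈ box b v2 X, Real.log (Ideal.absNorm (Ideal.span {a})) := by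
      refine Finset.sum_le_sum fun a ha => ?_
      exact Real.log_le_log (by positivity) (hb2 a ha).1
    rw [Finset.sum_const, card_box, nsmul_eq_mul] at this
    exact_mod_cast this
  have hmain : (X : ℝ) ^ n * Real.log 2 ≤ ∑ x ∈ pairs F Z, Real.log (Ideal.absNorm x.1) *
      ((cnt b (x.1 ^ x.2) v2 X : ℝ) - cnt b (x.1 ^ x.2) v1 X) := by
    simp only [mul_sub, Finset.sum_sub_distrib]
    rw [← hs1, ← hs2]
    have : (X : ℝ) ^ n * Real.log 2 ≤ (X : ℝ) ^ n * (L2 - L1) := by gcongr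
    linarith
  set E : ℝ := 4 * s * n * (2 * X : ℝ) ^ (n - 1) with hE
  have hE0 : 0 ≤ E := by positivity
  set f : ℕ → ℝ := fun m => E * (m : ℝ) ^ (1 / (n : ℝ) - 1) with hf
  have hf0 : ∀ m, 0 ≤ f m := fun m => by rw [hf]; positivity
  have hlog0 : ∀ x : Ideal (𝓞 F) × ℕ, 0 ≤ Real.log (Ideal.absNorm x.1) :=
    fun x => Real.log_natCast_nonneg _
  have hpt : ∀ x ∈ pairs F Z, Real.log (Ideal.absNorm x.1) *
      ((cnt b (x.1 ^ x.2) v2 X : ℝ) - cnt b (x.1 ^ x.2) v1 X) ≤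
      (if Ideal.absNorm x.1 ^ x.2 ≤ W ^ n then
        Real.log (Ideal.absNorm x.1) * f (Ideal.absNorm x.1 ^ x.2) else 0) +
      Real.log (Ideal.absNorm x.1) * H := by
    intro x hx
    obtain ⟨g1, g2, g3, g4⟩ := mem_pairs.mp hx
    have hI0 : x.1 ^ x.2 ≠ 0 := pow_ne_zero _ g2
    have hlx := hlog0 x
    split_ifs with hc
    · have h1 := cnt_small b hn (x.1 ^ x.2) hI0 v1 v2 X W
        (by rw [hX, ← mul_assoc]; gcongr) (by rw [map_pow]; exact hc)
      rw [map_pow] at h1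
      have h2 : (cnt b (x.1 ^ x.2) v2 X : ℝ) - cnt b (x.1 ^ x.2) v1 X ≤
          f (Ideal.absNorm x.1 ^ x.2) := h1
      have h3 := mul_le_mul_of_nonneg_left h2 hlx
      have h4 : 0 ≤ Real.log (Ideal.absNorm x.1) * H := by positivity
      linarith
    · rw [zero_add]
      gcongr
      have h1 := cnt_large b hn (x.1 ^ x.2) hI0 v2 D W C2 hW
        (by rw [map_pow]; exact (not_le.mp hc).le) (by rw [map_pow]; exact g4)
      have h2 : (cnt b (x.1 ^ x.2) v2 X : ℝ) ≤ H := by exact_mod_cast h1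
      have h3 : (0 : ℝ) ≤ cnt b (x.1 ^ x.2) v1 X := by positivity
      linarith
  have hsum := hmain.trans (Finset.sum_le_sum hpt)
  rw [Finset.sum_add_distrib, ← Finset.sum_filter, ← Finset.sum_mul] at hsum
  have hsmall : ∑ x ∈ (pairs F Z).filter (fun x => Ideal.absNorm x.1 ^ x.2 ≤ W ^ n),
      Real.log (Ideal.absNorm x.1) * f (Ideal.absNorm x.1 ^ x.2) ≤
      (X : ℝ) ^ n * (Real.log 2 / 2) := by
    calc _ ≤ ∑ x ∈ pairs F (W ^ n),
          Real.log (Ideal.absNorm x.1) * f (Ideal.absNorm x.1 ^ x.2) := by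
          refine Finset.sum_le_sum_of_subset_of_nonneg ?_ ?_
          · intro x hx
            rw [Finset.mem_filter, mem_pairs] at hx
            exact mem_pairs.mpr ⟨hx.1.1, hx.1.2.1, hx.1.2.2.1, hx.2⟩
          · intro x _ _
            exact mul_nonneg (hlog0 x) (hf0 _)
      _ ≤ (n : ℝ) ^ 2 * ∑ m ∈ Finset.Ioc 0 (W ^ n), ArithmeticFunction.vonMangoldt m * f m := by
          have := fiber (F := F) (Z := W ^ n) f hf0
          rwa [hfr] at this
      _ = (n : ℝ) ^ 2 * (E * ∑ m ∈ Finset.Ioc 0 (W ^ n),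
            ArithmeticFunction.vonMangoldt m * (m : ℝ) ^ (1 / (n : ℝ) - 1)) := by
          congr 1
          rw [Finset.mul_sum]
          refine Finset.sum_congr rfl fun m _ => ?_
          rw [hf]; ring
      _ ≤ (n : ℝ) ^ 2 * (E * (Dp * W)) := by
          have h1 := hps (W ^ n)
          have h2 : ((W ^ n : ℕ) : ℝ) ^ (1 / (n : ℝ)) = W := by
            push_cast
            rw [one_div, Real.pow_rpow_inv_natCast (by positivity) hn]
          rw [h2] at h1
          gcongr
      _ = G * ((X : ℝ) ^ (n - 1) * W) := by
          rw [hE, hG, mul_pow]; ring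
      _ ≤ (Real.log 2 / 2 * D) * ((X : ℝ) ^ (n - 1) * W) := by gcongr
      _ = (X : ℝ) ^ n * (Real.log 2 / 2) := by
          obtain ⟨k, hk⟩ := Nat.exists_eq_succ_of_ne_zero hn
          rw [hk, Nat.succ_eq_add_one, Nat.add_sub_cancel, pow_succ]
          have : (X : ℝ) = D * W := by rw [hX]; push_cast; rfl
          rw [show (X : ℝ) ^ k * X = X ^ k * (D * W) by rw [← this]]
          ring
  have hWX : (W : ℝ) ^ n ≤ (X : ℝ) ^ n := by
    gcongr
    rw [hX]; exact Nat.le_mul_of_pos_left W (by omega)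
  have hfin : (W : ℝ) ^ n * (Real.log 2 / 2) ≤
      (∑ x ∈ pairs F Z, Real.log (Ideal.absNorm x.1)) * H := by
    have : (W : ℝ) ^ n * (Real.log 2 / 2) ≤ (X : ℝ) ^ n * (Real.log 2 / 2) := by gcongr
    linarith
  have hHR : (0 : ℝ) < H := by exact_mod_cast hH0
  rw [← div_le_iff₀ hHR] at hfin
  calc _ = (W : ℝ) ^ n * (Real.log 2 / 2) / H := by field_simp
    _ ≤ _ := hfin

end SCP

namespace SCP
open scoped Classical

variable {F : Type*} [Field F] [NumberField F]

lemma pairs_upper : ∃ C : ℝ, 0 ≤ C ∧ ∀ (Z : ℕ) (q : Ideal (𝓞 F)), q ≠ 0 →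
    (∀ P ∈ primesF F Z, P ∣ q) →
    ∑ x ∈ pairs F Z, Real.log (Ideal.absNorm x.1) ≤
      Real.log (Ideal.absNorm q) + C * Real.sqrt Z := by
  obtain ⟨C, hC⟩ := Chebyshev.psi_sub_theta_le_mul_sqrt
  set n := Module.finrank ℤ (𝓞 F) with hn
  refine ⟨(n : ℝ) ^ 2 * |C|, by positivity, fun Z q hq hall => ?_⟩
  set f : ℕ → ℝ := fun m => if ¬ m.Prime then 1 else 0 with hf
  have hf0 : ∀ m, 0 ≤ f m := fun m => by
    simp only [hf]; split_ifs <;> norm_num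
  have hpt : ∀ x ∈ pairs F Z, Real.log (Ideal.absNorm x.1) ≤
      (if x.2 = 1 then Real.log (Ideal.absNorm x.1) else 0) +
      Real.log (Ideal.absNorm x.1) * f (Ideal.absNorm x.1 ^ x.2) := by
    intro x hx
    obtain ⟨g1, g2, g3, g4⟩ := mem_pairs.mp hx
    have hlx : 0 ≤ Real.log (Ideal.absNorm x.1) := Real.log_natCast_nonneg _
    split_ifs with hc
    · have := mul_nonneg hlx (hf0 (Ideal.absNorm x.1 ^ x.2))
      linarith
    · have : f (Ideal.absNorm x.1 ^ x.2) = 1 := by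
        simp only [hf]
        rw [if_pos (Nat.Prime.not_prime_pow (by omega))]
      rw [this]; simp
  refine (Finset.sum_le_sum hpt).trans ?_
  rw [Finset.sum_add_distrib, ← Finset.sum_filter]
  refine add_le_add ?_ ?_
  · set S := (pairs F Z).filter (fun x => x.2 = 1) with hS
    have hinj : Set.InjOn (Prod.fst : Ideal (𝓞 F) × ℕ → Ideal (𝓞 F)) S := by
      rintro ⟨P, k⟩ h ⟨Q, l⟩ h' he
      have h1 := (Finset.mem_filter.mp (Finset.mem_coe.mp h)).2
      have h2 := (Finset.mem_filter.mp (Finset.mem_coe.mp h')).2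
      simp only at he h1 h2
      rw [he, h1, h2]
    rw [← Finset.sum_image (f := fun P : Ideal (𝓞 F) => Real.log (Ideal.absNorm P)) hinj]
    have hQ : ∀ P ∈ S.image Prod.fst, P.IsPrime ∧ P ≠ 0 ∧ P ∣ q := by
      intro P hP
      obtain ⟨x, hx, rfl⟩ := Finset.mem_image.mp hP
      obtain ⟨hx1, hx2⟩ := Finset.mem_filter.mp hx
      obtain ⟨g1, g2, g3, g4⟩ := mem_pairs.mp hx1
      rw [hx2, pow_one] at g4
      exact ⟨g1, g2, hall _ (mem_primesF.mpr ⟨g4, g1, g2⟩)⟩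
    have hd : ∏ P ∈ S.image Prod.fst, P ∣ q :=
      Finset.prod_primes_dvd _ (fun P hP => Ideal.prime_of_isPrime (hQ P hP).2.1 (hQ P hP).1)
        (fun P hP => (hQ P hP).2.2)
    have hd' := map_dvd Ideal.absNorm hd
    rw [map_prod] at hd'
    have hq0 : 0 < Ideal.absNorm q := Nat.pos_of_ne_zero (by rwa [Ne, Ideal.absNorm_eq_zero_iff])
    have hle := Nat.le_of_dvd hq0 hd'
    have hne : ∀ P ∈ S.image Prod.fst, 0 < Ideal.absNorm P := fun P hP => by
      have := two_le_norm P (hQ P hP).1 (hQ P hP).2.1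
      omega
    rw [← Real.log_prod (fun P hP => by have := hne P hP; positivity)]
    refine Real.log_le_log (Finset.prod_pos fun P hP => by exact_mod_cast hne P hP) ?_
    exact_mod_cast hle
  · refine (fiber f hf0).trans ?_
    rw [mul_assoc]
    gcongr
    have h1 := Chebyshev.psi_sub_theta_eq_sum_not_prime (Z : ℝ)
    rw [Nat.floor_natCast] at h1
    have h2 : ∑ m ∈ Finset.Ioc 0 Z, ArithmeticFunction.vonMangoldt m * f m =
        Chebyshev.psi Z - Chebyshev.theta Z := by
      rw [h1, Finset.sum_filter]
      refine Finset.sum_congr rfl fun m _ => ?_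
      simp only [hf]
      split_ifs <;> simp
    rw [h2]
    refine (hC Z).trans ?_
    gcongr
    exact le_abs_self C

end SCP

/-- There is a constant `d > 0`, depending only on the number field `F`, such that every
nonzero ideal `q` of `𝓞 F` with `N(q) ≥ 2` admits a nonzero prime ideal `u` not dividing
`q` with `N(u) ≤ d · log N(q)`. -/
theorem exists_small_coprime_prime (F : Type*) [Field F] [NumberField F] :
    ∃ d : ℝ, 0 < d ∧ ∀ q : Ideal (𝓞 F), q ≠ 0 → 2 ≤ Ideal.absNorm q →
      ∃ u : Ideal (𝓞 F), u.IsPrime ∧ u ≠ 0 ∧ ¬ u ∣ q ∧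
        (Ideal.absNorm u : ℝ) ≤ d * Real.log (Ideal.absNorm q) := by
  have hn : Fintype.card (Module.Free.ChooseBasisIndex ℤ (𝓞 F)) ≠ 0 := by
    rw [← Module.finrank_eq_card_basis (RingOfIntegers.basis F)]
    exact Module.finrank_pos.ne'
  obtain ⟨c, B, hc, hB, hlow⟩ := SCP.psi_lower (RingOfIntegers.basis F) hn
  obtain ⟨C, hC, hup⟩ := SCP.pairs_upper (F := F)
  set n := Fintype.card (Module.Free.ChooseBasisIndex ℤ (𝓞 F)) with hnd
  have hl2 : 0 < Real.log 2 := Real.log_pos (by norm_num)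
  set κ : ℝ := C * Real.sqrt B with hκ
  have hκ0 : 0 ≤ κ := by positivity
  set w : ℝ := (2 * κ / c) ^ 2 with hw
  set A : ℝ := 2 / c + w / Real.log 2 with hA
  have hA0 : 0 < A := by positivity
  refine ⟨B * (2 ^ n * (A + 1 / Real.log 2)), by positivity, fun q hq hq2 => ?_⟩
  set y := Real.log (Ideal.absNorm q) with hy
  have hy2 : Real.log 2 ≤ y := Real.log_le_log (by norm_num) (by exact_mod_cast hq2)
  have hy0 : 0 < y := hl2.trans_le hy2
  set r := ⌈A * y⌉₊ with hr
  have hr0 : 0 < r := Nat.ceil_pos.mpr (by positivity)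
  have hr1 : A * y ≤ r := Nat.le_ceil _
  have hr2 : (r : ℝ) ≤ (A + 1 / Real.log 2) * y := by
    have h1 : (r : ℝ) < A * y + 1 := Nat.ceil_lt_add_one (by positivity)
    have h2 : 1 ≤ 1 / Real.log 2 * y := by
      rw [one_div, inv_mul_eq_div, le_div_iff₀ hl2]; linarith
    linarith
  obtain ⟨T, hT1, hT2, -⟩ := SCP.exists_root n hn r
  have hT0 : 0 < T := by
    rcases Nat.eq_zero_or_pos T with rfl | h
    · simp at hT2; omega
    · exact h
  set V : ℝ := ((T + 1 : ℕ) : ℝ) ^ n with hV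
  have hV1 : A * y < V := hr1.trans_lt (by rw [hV]; exact_mod_cast hT2)
  have hV2 : V ≤ 2 ^ n * ((A + 1 / Real.log 2) * y) := by
    calc V ≤ (2 * T : ℝ) ^ n := by
          rw [hV]; gcongr
          have : (T + 1) ≤ 2 * T := by omega
          exact_mod_cast this
      _ = 2 ^ n * (T : ℝ) ^ n := mul_pow _ _ _
      _ ≤ 2 ^ n * r := by gcongr; exact_mod_cast hT1
      _ ≤ _ := by gcongr
  have hV0 : 0 < V := by positivity
  by_contra hcon
  push Not at hcon
  have hall : ∀ P ∈ SCP.primesF F (B * (T + 1) ^ n), P ∣ q := by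
    intro P hP
    obtain ⟨g1, g2, g3⟩ := SCP.mem_primesF.mp hP
    by_contra hnd'
    have h1 := hcon P g2 g3 hnd'
    have h2 : (Ideal.absNorm P : ℝ) ≤ B * V := by rw [hV]; exact_mod_cast g1
    have h3 : (B : ℝ) * V ≤ B * (2 ^ n * ((A + 1 / Real.log 2) * y)) := by gcongr
    have h4 : (B : ℝ) * (2 ^ n * ((A + 1 / Real.log 2) * y)) =
      B * (2 ^ n * (A + 1 / Real.log 2)) * y := by ring
    linarith
  have h1 := (hlow (T + 1) (by omega)).trans (hup _ q hq hall)
  have hsq : C * Real.sqrt ((B * (T + 1) ^ n : ℕ) : ℝ) = κ * Real.sqrt V := by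
    have : ((B * (T + 1) ^ n : ℕ) : ℝ) = B * V := by rw [hV]; push_cast; ring
    rw [this, Real.sqrt_mul (by positivity), hκ]; ring
  rw [hsq] at h1
  change c * V ≤ y + κ * Real.sqrt V at h1
  have hwy : w ≤ w / Real.log 2 * y := by
    rw [div_mul_eq_mul_div, le_div_iff₀ hl2]
    have : 0 ≤ w := by positivity
    gcongr
  have hAy : A * y = 2 / c * y + w / Real.log 2 * y := by rw [hA]; ring
  have hVw : w ≤ V := by
    have : 0 ≤ 2 / c * y := by positivity
    linarith
  have hVy : 2 / c * y < V := by
    have : 0 ≤ w := by positivity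
    linarith
  have hS : 2 * κ / c ≤ Real.sqrt V := Real.le_sqrt_of_sq_le hVw
  rw [div_le_iff₀ hc] at hS
  have hSS : Real.sqrt V * Real.sqrt V = V := Real.mul_self_sqrt hV0.le
  have hS0 : 0 ≤ Real.sqrt V := Real.sqrt_nonneg V
  have h5 : 2 * (κ * Real.sqrt V) ≤ c * V := by
    calc 2 * (κ * Real.sqrt V) = (2 * κ) * Real.sqrt V := by ring
      _ ≤ (Real.sqrt V * c) * Real.sqrt V := by gcongr
      _ = c * (Real.sqrt V * Real.sqrt V) := by ring
      _ = c * V := by rw [hSS]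
  have h6 : 2 * y < c * V := by
    rw [div_mul_eq_mul_div, div_lt_iff₀ hc] at hVy
    linarith
  linarith
end

section
/- Let f be a function from the nonzero ideals of 𝒪_F to the positive real numbers which is multiplicative, i.e. f(I·J) = f(I)·f(J) whenever I and J are coprime nonzero ideals. Let d > 0 and assume that for every ε > 0 there exists c_ε > 0 such that f(p^n) ≤ c_ε · N(p)^{(d+ε)·n} for every nonzero prime ideal p of 𝒪_F and every integer n ≥ 0. Then for every ε > 0 there exists C > 0 such that f(q) ≤ C · N(q)^{d+ε} for every nonzero ideal q of 𝒪_F. -/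
open NumberField

/-- If `f` is a positive multiplicative function on the nonzero ideals of `𝓞 F` and
`f(p^n) ≪_ε N(p)^((d+ε)n)` uniformly in the prime `p` and in `n`, then
`f(q) ≪_ε N(q)^(d+ε)` for all nonzero ideals `q`. -/
theorem multiplicative_asymptotic_bound (F : Type*) [Field F] [NumberField F]
    (f : Ideal (𝓞 F) → ℝ)
    (hpos : ∀ q : Ideal (𝓞 F), q ≠ 0 → 0 < f q)
    (hmul : ∀ I J : Ideal (𝓞 F), I ≠ 0 → J ≠ 0 → IsCoprime I J →
      f (I * J) = f I * f J)
    (d : ℝ) (hd : 0 < d)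
    (hprime : ∀ ε : ℝ, 0 < ε → ∃ c : ℝ, 0 < c ∧
      ∀ P : Ideal (𝓞 F), P.IsPrime → P ≠ 0 → ∀ n : ℕ,
        f (P ^ n) ≤ c * (Ideal.absNorm P : ℝ) ^ ((d + ε) * n)) :
    ∀ ε : ℝ, 0 < ε → ∃ C : ℝ, 0 < C ∧
      ∀ q : Ideal (𝓞 F), q ≠ 0 → f q ≤ C * (Ideal.absNorm q : ℝ) ^ (d + ε) := by
  classical
  intro ε hε
  obtain ⟨c, hc, hcb⟩ := hprime (ε / 2) (by linarith)
  set k : ℝ := max c 1 with hk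
  have hk1 : 1 ≤ k := le_max_right _ _
  have hk0 : 0 < k := by linarith
  have hf1 : f 1 = 1 := by
    have h := hmul 1 1 one_ne_zero one_ne_zero isCoprime_one_left
    rw [mul_one] at h
    have := hpos 1 one_ne_zero
    field_simp at h
    linarith
  have hft : f ⊤ ≤ 1 := by rw [← Ideal.one_eq_top, hf1]
  have hN : ∀ I : Ideal (𝓞 F), I ≠ 0 → (1 : ℝ) ≤ (Ideal.absNorm I : ℝ) := by
    intro I hI
    have : Ideal.absNorm I ≠ 0 := by
      rw [Ne, Ideal.absNorm_eq_zero_iff]; exact hI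
    exact_mod_cast Nat.one_le_iff_ne_zero.mpr this
  -- the finitely many primes of small norm
  have hfin : {I : Ideal (𝓞 F) | Ideal.absNorm I ≤ ⌈k ^ (2 / ε)⌉₊}.Finite :=
    Ideal.finite_setOfPred_absNorm_le _
  set S := hfin.toFinset with hS
  have hlocS : ∀ P : Ideal (𝓞 F), P.IsPrime → P ≠ 0 → ∀ n : ℕ,
      f (P ^ n) ≤ k * (Ideal.absNorm (P ^ n) : ℝ) ^ (d + ε) := by
    intro P hP h0 n
    have h1 := hN P h0
    refine (hcb P hP h0 n).trans ?_
    rw [map_pow, Nat.cast_pow, ← Real.rpow_natCast, ← Real.rpow_mul (by linarith)]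
    have h2 : (Ideal.absNorm P : ℝ) ^ ((d + ε / 2) * n) ≤
        (Ideal.absNorm P : ℝ) ^ ((n : ℝ) * (d + ε)) := by
      apply Real.rpow_le_rpow_of_exponent_le h1
      have : (0 : ℝ) ≤ n := Nat.cast_nonneg n
      nlinarith
    exact mul_le_mul (le_max_left _ _) h2 (by positivity) hk0.le
  have hloc : ∀ P : Ideal (𝓞 F), P.IsPrime → P ≠ 0 → P ∉ S → ∀ n : ℕ,
      f (P ^ n) ≤ (Ideal.absNorm (P ^ n) : ℝ) ^ (d + ε) := by
    intro P hP h0 hPS n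
    have h1 := hN P h0
    rcases Nat.eq_zero_or_pos n with rfl | hn
    · simp [hft]
    refine (hcb P hP h0 n).trans ?_
    rw [map_pow, Nat.cast_pow, ← Real.rpow_natCast, ← Real.rpow_mul (by linarith)]
    have hbig : k ^ (2 / ε) ≤ (Ideal.absNorm P : ℝ) := by
      simp only [hS, Set.Finite.mem_toFinset, Set.mem_ofPred_eq, not_le] at hPS
      exact (Nat.le_ceil _).trans (by exact_mod_cast hPS.le)
    have hk2 : k ≤ (Ideal.absNorm P : ℝ) ^ (ε / 2) := by
      have := Real.rpow_le_rpow (by positivity) hbig (by positivity : 0 ≤ ε / 2)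
      rwa [← Real.rpow_mul hk0.le, show 2 / ε * (ε / 2) = 1 by field_simp,
        Real.rpow_one] at this
    calc c * (Ideal.absNorm P : ℝ) ^ ((d + ε / 2) * n)
        ≤ (Ideal.absNorm P : ℝ) ^ (ε / 2) * (Ideal.absNorm P : ℝ) ^ ((d + ε / 2) * n) := by
          gcongr
          exact (le_max_left _ _).trans hk2
      _ = (Ideal.absNorm P : ℝ) ^ (ε / 2 + (d + ε / 2) * n) := by
          rw [Real.rpow_add (by linarith)]
      _ ≤ _ := by
          apply Real.rpow_le_rpow_of_exponent_le h1
          have : (1 : ℝ) ≤ n := by exact_mod_cast hn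
          nlinarith
  have key : ∀ (e : Ideal (𝓞 F) → ℕ) (T : Finset (Ideal (𝓞 F))),
      (∀ P ∈ T, P.IsPrime ∧ P ≠ 0) →
      f (∏ P ∈ T, P ^ e P) ≤ k ^ (T ∩ S).card *
        (Ideal.absNorm (∏ P ∈ T, P ^ e P) : ℝ) ^ (d + ε) := by
    intro e T
    induction T using Finset.induction_on with
    | empty => intro _; simp [hft]
    | insert P T hPT ih =>
      intro hT
      have ih' := ih fun Q hQ => hT Q (Finset.mem_insert_of_mem hQ)
      obtain ⟨hP, hP0⟩ := hT P (Finset.mem_insert_self _ _)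
      have hne : ∏ Q ∈ T, Q ^ e Q ≠ 0 :=
        Finset.prod_ne_zero_iff.mpr fun Q hQ =>
          pow_ne_zero _ (hT Q (Finset.mem_insert_of_mem hQ)).2
      have hcop : IsCoprime (P ^ e P) (∏ Q ∈ T, Q ^ e Q) := by
        apply IsCoprime.prod_right
        intro Q hQ
        obtain ⟨hQp, hQ0⟩ := hT Q (Finset.mem_insert_of_mem hQ)
        apply IsCoprime.pow
        have hm1 := hP.isMaximal hP0
        have hm2 := hQp.isMaximal hQ0
        rw [Ideal.isCoprime_iff_sup_eq]
        exact hm1.coprime_of_ne hm2 (by rintro rfl; exact hPT hQ)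
      rw [Finset.prod_insert hPT, hmul _ _ (pow_ne_zero _ hP0) hne hcop, map_mul, Nat.cast_mul,
        Real.mul_rpow (by positivity) (by positivity)]
      have hfp := (hpos _ hne).le
      by_cases hPS : P ∈ S
      · rw [Finset.insert_inter_of_mem hPS, Finset.card_insert_of_notMem (by simp [hPT])]
        refine (mul_le_mul (hlocS P hP hP0 (e P)) ih' hfp (by positivity)).trans (le_of_eq ?_)
        ring
      · rw [Finset.insert_inter_of_notMem hPS]
        refine (mul_le_mul (hloc P hP hP0 hPS (e P)) ih' hfp (by positivity)).trans (le_of_eq ?_)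
        ring
  refine ⟨k ^ S.card, by positivity, fun q hq => ?_⟩
  have hq' : q = ∏ P ∈ (UniqueFactorizationMonoid.normalizedFactors q).toFinset,
      P ^ (UniqueFactorizationMonoid.normalizedFactors q).count P := by
    rw [← Finset.prod_multiset_count, Ideal.prod_normalizedFactors_eq_self hq]
  have h := key (fun P => (UniqueFactorizationMonoid.normalizedFactors q).count P)
    (UniqueFactorizationMonoid.normalizedFactors q).toFinset (by
      intro P hP
      have hp := UniqueFactorizationMonoid.prime_of_normalized_factor P (Multiset.mem_toFinset.mp hP)
      exact ⟨Ideal.isPrime_of_prime hp, hp.ne_zero⟩)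
  rw [← hq'] at h
  refine h.trans ?_
  gcongr
  exact Finset.inter_subset_right
end

section
/- Let Y be a nonempty finite set with n elements and let dist : Y × Y → ℕ satisfy dist(y₁, y₂) ≤ dist(y₁, z) + dist(y₂, z) for all y₁, y₂, z ∈ Y. Let G be a finite group acting freely on Y such that dist(g·x, g·y) = dist(x, y) for all g ∈ G and x, y ∈ Y, and let c > 0 be a real number with n ≤ c·|G|. Let ε be a real number with 0 < ε < 1/(2c), let M ∈ ℕ, and suppose there is a subset Z ⊆ Y × Y with |Z| ≤ ε·n² such that dist(x, y) ≤ M for every pair (x, y) ∉ Z. Then dist(y₁, y₂) ≤ 2M for all y₁, y₂ ∈ Y. -/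
/-- Diameter vs almost diameter: if a finite group `G` acts freely and isometrically on a
finite set `Y` with `|Y| ≤ c·|G|`, `dist` satisfies the triangle-type inequality
`dist y₁ y₂ ≤ dist y₁ z + dist y₂ z`, and all pairs outside an exceptional set `Z` of size
at most `ε·n²` (with `ε < 1/(2c)`) are at distance at most `M`, then every pair of points
is at distance at most `2M`. -/
theorem diameter_le_two_mul_almost_diameter {Y G : Type*} [Fintype Y] [Nonempty Y]
    [Group G] [Fintype G] [MulAction G Y]
    (dist : Y → Y → ℕ)
    (htri : ∀ y₁ y₂ z, dist y₁ y₂ ≤ dist y₁ z + dist y₂ z)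
    (hfree : ∀ (g : G) (y : Y), g • y = y → g = 1)
    (hinv : ∀ (g : G) (x y : Y), dist (g • x) (g • y) = dist x y)
    (c : ℝ) (hc : 0 < c)
    (hcard : (Fintype.card Y : ℝ) ≤ c * (Fintype.card G : ℝ))
    (ε : ℝ) (hε0 : 0 < ε) (hε : ε < 1 / (2 * c))
    (M : ℕ) (Z : Finset (Y × Y))
    (hZ : (Z.card : ℝ) ≤ ε * (Fintype.card Y : ℝ) ^ 2)
    (hM : ∀ p : Y × Y, p ∉ Z → dist p.1 p.2 ≤ M) :
    ∀ y₁ y₂ : Y, dist y₁ y₂ ≤ 2 * M := by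
  classical
  have key : ∀ y : Y, 2 * (Finset.univ.filter (fun z => M < dist y z)).card < Fintype.card Y := by
    intro y
    have h1 : Fintype.card G * (Finset.univ.filter (fun z => M < dist y z)).card ≤ Z.card := by
      rw [← Finset.card_univ, ← Finset.card_product]
      apply Finset.card_le_card_of_injOn (fun p : G × Y => (p.1 • y, p.1 • p.2))
      · intro p hp
        have hp2 : M < dist y p.2 := by simpa using hp
        by_contra hn
        have h := hM (p.1 • y, p.1 • p.2) hn
        simp only [hinv] at h
        omega
      · rintro ⟨g, a⟩ _ ⟨k, b⟩ _ h
        simp only [Prod.mk.injEq] at h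
        have hg : k⁻¹ * g = 1 := hfree _ y (by rw [mul_smul, h.1, inv_smul_smul])
        have hgk : g = k := (inv_mul_eq_one.mp hg).symm
        subst hgk
        have hab : a = b := by simpa using h.2
        rw [hab]
    have h1r : (Fintype.card G : ℝ) * ((Finset.univ.filter (fun z => M < dist y z)).card : ℝ)
        ≤ (Z.card : ℝ) := by exact_mod_cast h1
    have hn : (0 : ℝ) < Fintype.card Y := by exact_mod_cast Fintype.card_pos
    have hG : (0 : ℝ) < Fintype.card G := by exact_mod_cast Fintype.card_pos
    have h2 : ε * (2 * c) < 1 := (lt_div_iff₀ (by positivity)).mp hε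
    generalize hb : (Finset.univ.filter (fun z => M < dist y z)).card = b at *
    have h3 : (2 * b : ℝ) < Fintype.card Y := by
      set n : ℝ := (Fintype.card Y : ℝ)
      set m : ℝ := (Fintype.card G : ℝ)
      have h4 : m * (2 * b) ≤ (2 * ε * n) * n := by nlinarith
      have h5 : (2 * ε * n) * n ≤ (2 * ε * n) * (c * m) :=
        mul_le_mul_of_nonneg_left hcard (by positivity)
      have h6 : (ε * (2 * c)) * (n * m) < 1 * (n * m) :=
        mul_lt_mul_of_pos_right h2 (by positivity)
      have h7 : m * (2 * b) < m * n := by linarith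
      exact lt_of_mul_lt_mul_left h7 hG.le
    exact_mod_cast h3
  intro y₁ y₂
  by_contra hcon
  have hcov : (Finset.univ : Finset Y) ⊆ Finset.univ.filter (fun z => M < dist y₁ z) ∪
      Finset.univ.filter (fun z => M < dist y₂ z) := by
    intro z _
    have := htri y₁ y₂ z
    simp only [Finset.mem_union, Finset.mem_filter, Finset.mem_univ, true_and]
    omega
  have h1 := Finset.card_le_card hcov
  have h2 := Finset.card_union_le (Finset.univ.filter (fun z => M < dist y₁ z))
    (Finset.univ.filter (fun z => M < dist y₂ z))
  rw [Finset.card_univ] at h1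
  have h3 := key y₁
  have h4 := key y₂
  omega
end
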